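/- Let k ≥ 1, let r ≥ 1, and let G_1, G_2, …, G_r be finite simple graphs on pairwise disjoint vertex sets such that each of G_1, …, G_{r−1} is a cycle C_m (m ≥ 3) or a crown C_m ⊙ K_1 (m ≥ 3), and G_r is a cycle C_m (m ≥ 3), a crown C_m ⊙ K_1 (m ≥ 3), a path P_m (m ≥ 1), a comb P_m ⊙ K_1 (m ≥ 1), a triangular snake T_m (m ≥ 2), or a quadrilateral snake Q_m (m ≥ 2). Then the disjoint union G_1 ∪ G_2 ∪ … ∪ G_r is a k-geometric mean graph. -/

import Mathlib

/-!
Every graph in the list has a labeling of a special form that may be shifted to start at an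
arbitrary value `x ≥ 1` (`ShiftLabeling`): the vertices receive distinct values
in `[x, x + t)`, and the edges receive, bijectively, the labels in `[x, x + q)`, where `q` is
the number of edges. The point is that cycles and crowns admit such a labeling with `t = q`, not
using the value `x + q`, so that the next component can start at `x + q`; the last component only
needs `t = q + 1`. Stacking the components on consecutive intervals (`shift_sigma`) therefore
labels the whole union.

That `c` is a rounding of `√(a b)` is equivalent to `(c - 1)² < a b < (c + 1)²`. In the
labelings below neighbouring values are close together (they differ by at most five), so this
reduces to linear conditions (`isMean_of`), valid for all shifts `x ≥ 1`. The labelings, written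
with shift `0`, are as follows.

* Cycle `C m`: go up through the even values and come back through the odd ones. The edges are
  `{0, 1}`, `{a, a + 2}` for `a + 2 < m`, and `{m - 2, m - 1}`, labelled `0`, `a + 1`, `m - 1`.
* Crown: with `z` the value of a cycle vertex in the cycle labeling, give that vertex the value
  `2 z` and its pendant neighbour `2 z + 1`, exchanging these two values when `z = m - 1`. A
  cycle edge whose label was `c` gets `2 c`, and the pendant edge gets `2 z + 1`.
* Path, comb and snakes: the `i`-th path vertex gets `d i`, where `d = 1, 2, 3, 4` is the number of
  edges per step; the pendant vertex, or the one or two new vertices, attached at step `i` get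
  `d i + 1` and `d i + 2`, in order.
-/

/-- The ceiling of the square root of a natural number. -/
def ceilSqrt (n : ℕ) : ℕ :=
  if Nat.sqrt n * Nat.sqrt n = n then Nat.sqrt n else Nat.sqrt n + 1

/-- `ψ` is a `k`-geometric mean labeling of the graph `G`: an injection of the vertices into
`{k, …, k + q}` (where `q` is the number of edges of `G`) such that each edge `uv` can be
assigned the label `⌊√(ψ u * ψ v)⌋` or `⌈√(ψ u * ψ v)⌉` (the choice may vary from edge to
edge) so that the resulting set of edge labels is exactly `{k, …, k + q - 1}`. -/
def IsKGeometricMeanLabeling {V : Type*} (G : SimpleGraph V) (k : ℕ) (ψ : V → ℕ) : Prop :=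
  Function.Injective ψ ∧
  (∀ v : V, ψ v ∈ Set.Icc k (k + G.edgeSet.ncard)) ∧
  ∃ L : Sym2 V → ℕ,
    (∀ u v : V, G.Adj u v →
      L s(u, v) = Nat.sqrt (ψ u * ψ v) ∨ L s(u, v) = ceilSqrt (ψ u * ψ v)) ∧
    L '' G.edgeSet = Set.Icc k (k + G.edgeSet.ncard - 1)

/-- `G` is a `k`-geometric mean graph: it admits a `k`-geometric mean labeling.
A geometric mean graph is a `1`-geometric mean graph. -/
def IsKGeometricMeanGraph {V : Type*} (G : SimpleGraph V) (k : ℕ) : Prop :=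
  ∃ ψ : V → ℕ, IsKGeometricMeanLabeling G k ψ

/-- The path `P n` on `n` vertices `u_1, …, u_n`, with edges `u_i u_{i+1}` (`0`-indexed here). -/
def pathG (n : ℕ) : SimpleGraph (Fin n) :=
  SimpleGraph.fromRel (fun u v => v.val = u.val + 1)

/-- The cycle `C n` on `n` vertices (intended for `n ≥ 3`): the path `P n` together with the
edge `u_n u_1`. -/
def cycleG (n : ℕ) : SimpleGraph (Fin n) :=
  SimpleGraph.fromRel (fun u v => v.val = u.val + 1 ∨ (u.val = n - 1 ∧ v.val = 0))

/-- The crown `C n ⊙ K 1`: the cycle `C n` on the `inl` vertices, plus a pendant vertex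
`inr i` joined to `inl i` for each `i`. -/
def crownG (n : ℕ) : SimpleGraph (Fin n ⊕ Fin n) :=
  SimpleGraph.fromRel (fun a b =>
    match a, b with
    | Sum.inl u, Sum.inl v => v.val = u.val + 1 ∨ (u.val = n - 1 ∧ v.val = 0)
    | Sum.inl u, Sum.inr v => u = v
    | _, _ => False)

/-- The comb `P n ⊙ K 1`: the path `P n` on the `inl` vertices, plus a pendant vertex
`inr i` joined to `inl i` for each `i`. -/
def combG (n : ℕ) : SimpleGraph (Fin n ⊕ Fin n) :=
  SimpleGraph.fromRel (fun a b =>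
    match a, b with
    | Sum.inl u, Sum.inl v => v.val = u.val + 1
    | Sum.inl u, Sum.inr v => u = v
    | _, _ => False)

/-- The triangular snake `T n`: the path on the `inl` vertices `u_1, …, u_n`, and for each
`1 ≤ i ≤ n - 1` a new vertex `inr i` joined to `u_i` and `u_{i+1}`. -/
def triSnakeG (n : ℕ) : SimpleGraph (Fin n ⊕ Fin (n - 1)) :=
  SimpleGraph.fromRel (fun a b =>
    match a, b with
    | Sum.inl u, Sum.inl v => v.val = u.val + 1
    | Sum.inr w, Sum.inl u => u.val = w.val ∨ u.val = w.val + 1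
    | _, _ => False)

/-- The quadrilateral snake `Q n`: the path on the `inl` vertices `u_1, …, u_n`, and for each
`1 ≤ i ≤ n - 1` new vertices `v_i = inr (i, false)` and `w_i = inr (i, true)` together with
the edges `u_i v_i`, `v_i w_i` and `w_i u_{i+1}`. -/
def quadSnakeG (n : ℕ) : SimpleGraph (Fin n ⊕ (Fin (n - 1) × Bool)) :=
  SimpleGraph.fromRel (fun a b =>
    match a, b with
    | Sum.inl u, Sum.inl v => v.val = u.val + 1
    | Sum.inl u, Sum.inr (i, b) => (b = false ∧ u.val = i.val) ∨ (b = true ∧ u.val = i.val + 1)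
    | Sum.inr (i, b), Sum.inr (j, c) => i = j ∧ b = false ∧ c = true
    | _, _ => False)

/-- The disjoint union of a finite family of graphs on pairwise disjoint vertex sets. -/
def sigmaUnion {ι : Type*} {V : ι → Type*} (G : ∀ i, SimpleGraph (V i)) :
    SimpleGraph (Σ i, V i) :=
  SimpleGraph.fromRel (fun a b => ∃ h : a.1 = b.1, (G b.1).Adj (h ▸ a.2) b.2)

/-! ### Shiftable labelings -/

/-- `c` is the floor or the ceiling of `√(a b)`, that is `(c - 1)² < a b < (c + 1)²`, written
without subtraction. -/
def IsMean (a b c : ℕ) : Prop :=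
  c * c + 1 < a * b + 2 * c ∧ a * b < (c + 1) * (c + 1)

lemma IsMean.eq_or {a b c : ℕ} (h : IsMean a b c) :
    c = Nat.sqrt (a * b) ∨ c = ceilSqrt (a * b) := by
  obtain ⟨h1, h2⟩ := h
  generalize a * b = n at *
  rcases le_or_gt (c * c) n with h | h
  · left
    exact Nat.eq_sqrt.2 ⟨h, h2⟩
  · right
    obtain ⟨d, rfl⟩ : ∃ d, c = d + 1 := by
      refine ⟨c - 1, ?_⟩
      rcases c with _ | c
      · simp at h
      · simp
    have h3 : d * d < n := by nlinarith
    have h4 : d = Nat.sqrt n := Nat.eq_sqrt.2 ⟨h3.le, h⟩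
    unfold ceilSqrt
    rw [← h4, if_neg h3.ne]

lemma IsMean.symm {a b c : ℕ} (h : IsMean a b c) : IsMean b a c := by
  unfold IsMean at *
  rwa [mul_comm b a]

lemma isMean_of_le {x y c : ℕ} (hx : 1 ≤ x) (h1 : x ≤ y) (h2 : y + x ≤ 2 * c + 2)
    (h : c = x ∨ (c = x + 1 ∧ x + 1 ≤ y) ∨ (c = x + 2 ∧ x + 4 ≤ y) ∨
      (c = x + 2 ∧ x + 3 ≤ y ∧ 2 ≤ x)) : IsMean x y c := by
  obtain ⟨d, rfl⟩ := Nat.exists_eq_add_of_le h1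
  unfold IsMean
  rcases h with rfl | ⟨rfl, h⟩ | ⟨rfl, h⟩ | ⟨rfl, h, h'⟩ <;> constructor <;> nlinarith

/-- Linear sufficient conditions for `c` to be a rounding of `√(x y)`, in either order of `x` and
`y`. Writing `c = x + e` and `y = x + d` with `e ≤ 2`, the upper bound holds when
`d ≤ 2 (e + 1)`. -/
lemma isMean_of {x y c : ℕ} (hx : 1 ≤ x) (hy : 1 ≤ y) (h2 : y + x ≤ 2 * c + 2)
    (h : (x ≤ y ∧ (c = x ∨ (c = x + 1 ∧ x + 1 ≤ y) ∨ (c = x + 2 ∧ x + 4 ≤ y) ∨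
      (c = x + 2 ∧ x + 3 ≤ y ∧ 2 ≤ x))) ∨
      (y ≤ x ∧ (c = y ∨ (c = y + 1 ∧ y + 1 ≤ x) ∨ (c = y + 2 ∧ y + 4 ≤ x) ∨
      (c = y + 2 ∧ y + 3 ≤ x ∧ 2 ≤ y)))) : IsMean x y c := by
  rcases h with ⟨h, hc⟩ | ⟨h, hc⟩
  · exact isMean_of_le hx h h2 hc
  · exact (isMean_of_le hy h (by omega) hc).symm

/-- `G` has a geometric mean labeling that can be shifted to any start `x ≥ 1`: there are vertex
labels `ψ` in `[x, x + t)` and a symmetric function `l` giving the edge labels, which run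
bijectively through `[x, x + q)`. -/
def ShiftLabeling {V : Type*} (G : SimpleGraph V) (q t : ℕ) : Prop :=
  ∀ x : ℕ, 1 ≤ x → ∃ (ψ : V → ℕ) (l : V → V → ℕ),
    Function.Injective ψ ∧
    (∀ v, x ≤ ψ v ∧ ψ v < x + t) ∧
    (∀ u v, l u v = l v u) ∧
    (∀ u v, G.Adj u v → x ≤ l u v ∧ l u v < x + q ∧ IsMean (ψ u) (ψ v) (l u v)) ∧
    (∀ u v u' v', G.Adj u v → G.Adj u' v' → l u v = l u' v' → s(u, v) = s(u', v')) ∧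
    (∀ c, x ≤ c → c < x + q → ∃ u v, G.Adj u v ∧ l u v = c)

/-- The number of edges does not enter the hypothesis: the edge labels form a bijection with
`[k, k + q)`, which forces `q` to be that number. -/
lemma isKGeometricMeanGraph_of_shift {V : Type*} {G : SimpleGraph V} {q k : ℕ} (hk : 1 ≤ k)
    (h : ShiftLabeling G q (q + 1)) : IsKGeometricMeanGraph G k := by
  obtain ⟨ψ, l, hψ, hr, hs, hm, hi, hsur⟩ := h k hk
  let L : Sym2 V → ℕ := Sym2.lift ⟨l, hs⟩
  have hL : ∀ u v, L s(u, v) = l u v := fun u v => rfl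
  have himg : L '' G.edgeSet = (Finset.Ico k (k + q) : Finset ℕ) := by
    ext c
    simp only [Set.mem_image, Finset.coe_Ico, Set.mem_Ico]
    constructor
    · rintro ⟨e, he, rfl⟩
      induction e with | _ u v =>
      exact ⟨(hm u v he).1, (hm u v he).2.1⟩
    · rintro ⟨h1, h2⟩
      obtain ⟨u, v, ha, hc⟩ := hsur c h1 h2
      exact ⟨s(u, v), ha, hc⟩
  have hinj : Set.InjOn L G.edgeSet := by
    intro e he e' he' hee
    induction e with | _ u v =>
    induction e' with | _ u' v' =>
    exact hi u v u' v' he he' hee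
  have hcard : G.edgeSet.ncard = q := by
    rw [← hinj.ncard_image, himg, Set.ncard_coe_finset]
    simp
  refine ⟨ψ, hψ, ?_, L, ?_, ?_⟩
  · intro v
    have := hr v
    rw [hcard, Set.mem_Icc]
    omega
  · intro u v ha
    exact (hm u v ha).2.2.eq_or
  · rw [himg, hcard]
    ext c
    simp only [Finset.coe_Ico, Set.mem_Ico, Set.mem_Icc]
    omega

lemma ShiftLabeling.of_iso {V W : Type*} {G : SimpleGraph V} {H : SimpleGraph W} {q t : ℕ}
    (φ : G ≃g H) (h : ShiftLabeling H q t) : ShiftLabeling G q t := by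
  intro x hx
  obtain ⟨ψ, l, hψ, hr, hs, hm, hi, hsur⟩ := h x hx
  refine ⟨fun v => ψ (φ v), fun u v => l (φ u) (φ v), hψ.comp φ.injective, fun v => hr _,
    fun u v => hs _ _, fun u v ha => hm _ _ (φ.map_adj_iff.2 ha), ?_, ?_⟩
  · intro u v u' v' ha ha' he
    have := hi _ _ _ _ (φ.map_adj_iff.2 ha) (φ.map_adj_iff.2 ha') he
    simpa [Sym2.eq_iff] using this
  · intro c h1 h2
    obtain ⟨u, v, ha, hc⟩ := hsur c h1 h2
    refine ⟨φ.symm u, φ.symm v, φ.symm.map_adj_iff.2 ha, ?_⟩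
    simpa using hc

lemma ShiftLabeling.mono {V : Type*} {G : SimpleGraph V} {q t t' : ℕ} (htt : t ≤ t')
    (h : ShiftLabeling G q t) : ShiftLabeling G q t' := by
  intro x hx
  obtain ⟨ψ, l, hψ, hr, h⟩ := h x hx
  exact ⟨ψ, l, hψ, fun v => ⟨(hr v).1, by have := (hr v).2; omega⟩, h⟩

/-- To give a shiftable labeling of the graph generated by an antisymmetric relation `r`, it
suffices to give vertex labels `f` and labels `g` on the pairs related by `r`, both for
shift `0`, and to check the geometric mean condition after shifting. -/
lemma shift_of_rel {V : Type*} (r : V → V → Prop) (f : V → ℕ) (g : V → V → ℕ) {q t : ℕ}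
    (hf : ∀ u v, f u = f v → u = v) (hft : ∀ v, f v < t)
    (hr : ∀ u v, r u v → r v u → False)
    (hg : ∀ u v, r u v → g u v < q)
    (hm : ∀ x, 1 ≤ x → ∀ u v, r u v → IsMean (x + f u) (x + f v) (x + g u v))
    (hi : ∀ u v u' v', r u v → r u' v' → g u v = g u' v' → u = u' ∧ v = v')
    (hs : ∀ c, c < q → ∃ u v, r u v ∧ g u v = c) :
    ShiftLabeling (SimpleGraph.fromRel r) q t := by
  classical
  intro x hx
  have key : ∀ u v, (SimpleGraph.fromRel r).Adj u v ↔ r u v ∨ r v u := by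
    intro u v
    rw [SimpleGraph.fromRel_adj]
    constructor
    · exact fun h => h.2
    · refine fun h => ⟨?_, h⟩
      rintro rfl
      rcases h with h | h <;> exact hr _ _ h h
  -- an edge is labelled through its unique orientation in `r`
  let l : V → V → ℕ := fun u v => if r u v then x + g u v else if r v u then x + g v u else 0
  have l1 : ∀ u v, r u v → l u v = x + g u v := fun u v h => if_pos h
  have l2 : ∀ u v, r v u → l u v = x + g v u := fun u v h => by
    have : ¬ r u v := fun h' => hr _ _ h h'
    simp [l, this, h]
  refine ⟨fun v => x + f v, l, fun u v h => hf u v (by simpa using h), ?_, ?_, ?_, ?_, ?_⟩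
  · intro v
    have := hft v
    simp only
    omega
  · intro u v
    by_cases h1 : r u v
    · rw [l1 _ _ h1, l2 _ _ h1]
    · by_cases h2 : r v u
      · rw [l1 _ _ h2, l2 _ _ h2]
      · simp [l, h1, h2]
  · intro u v ha
    rcases (key u v).1 ha with h | h
    · rw [l1 _ _ h]
      exact ⟨by omega, by have := hg _ _ h; omega, hm x hx _ _ h⟩
    · rw [l2 _ _ h]
      exact ⟨by omega, by have := hg _ _ h; omega, (hm x hx _ _ h).symm⟩
  · intro u v u' v' ha ha' he
    rw [Sym2.eq_iff]
    rcases (key u v).1 ha with h | h <;> rcases (key u' v').1 ha' with h' | h'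
    · rw [l1 _ _ h, l1 _ _ h'] at he
      have := hi _ _ _ _ h h' (by omega)
      tauto
    · rw [l1 _ _ h, l2 _ _ h'] at he
      have := hi _ _ _ _ h h' (by omega)
      tauto
    · rw [l2 _ _ h, l1 _ _ h'] at he
      have := hi _ _ _ _ h h' (by omega)
      tauto
    · rw [l2 _ _ h, l2 _ _ h'] at he
      have := hi _ _ _ _ h h' (by omega)
      tauto
  · intro c h1 h2
    obtain ⟨u, v, h, hc⟩ := hs (c - x) (by omega)
    exact ⟨u, v, (key u v).2 (Or.inl h), by rw [l1 _ _ h]; omega⟩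

/-! ### Paths, combs and snakes -/

lemma shift_path {m : ℕ} (hm : 1 ≤ m) : ShiftLabeling (pathG m) (m - 1) (m - 1 + 1) := by
  unfold pathG
  refine shift_of_rel _ (fun u => u.val) (fun u _ => u.val) ?_ ?_ ?_ ?_ ?_ ?_ ?_
  · intro u v h
    exact Fin.ext h
  · intro v
    omega
  · intro u v
    omega
  · intro u v
    omega
  · intro x hx u v h
    exact isMean_of (by omega) (by omega) (by omega) (by omega)
  · intro u v u' v' h h' he
    simp only [Fin.ext_iff]
    omega
  · intro c hc
    exact ⟨⟨c, by omega⟩, ⟨c + 1, by omega⟩, rfl, rfl⟩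

lemma shift_comb {m : ℕ} (hm : 1 ≤ m) :
    ShiftLabeling (combG m) (2 * m - 1) (2 * m - 1 + 1) := by
  unfold combG
  refine shift_of_rel _ (Sum.elim (fun u => 2 * u.val) (fun u => 2 * u.val + 1))
    (fun a b => match a, b with
      | Sum.inl u, Sum.inl _ => 2 * u.val + 1
      | Sum.inl u, Sum.inr _ => 2 * u.val
      | _, _ => 0) ?_ ?_ ?_ ?_ ?_ ?_ ?_
  · rintro (u | u) (v | v) h <;> simp [Fin.ext_iff] at h ⊢ <;> omega
  · rintro (u | u) <;> simp <;> omega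
  · rintro (u | u) (v | v) <;> simp
    omega
  · rintro (u | u) (v | v) h <;> simp at h ⊢ <;> omega
  · rintro x hx (u | u) (v | v) h <;> simp [Fin.ext_iff] at h ⊢ <;>
      exact isMean_of (by omega) (by omega) (by omega) (by omega)
  · rintro (u | u) (v | v) (u' | u') (v' | v') h h' he <;>
      simp [Fin.ext_iff] at h h' he ⊢ <;> omega
  · intro c hc
    rcases Nat.even_or_odd' c with ⟨i, rfl | rfl⟩
    · exact ⟨Sum.inl ⟨i, by omega⟩, Sum.inr ⟨i, by omega⟩, rfl, rfl⟩
    · exact ⟨Sum.inl ⟨i, by omega⟩, Sum.inl ⟨i + 1, by omega⟩, rfl, rfl⟩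

lemma shift_triSnake {m : ℕ} :
    ShiftLabeling (triSnakeG m) (3 * (m - 1)) (3 * (m - 1) + 1) := by
  unfold triSnakeG
  refine shift_of_rel _ (Sum.elim (fun u => 3 * u.val) (fun u => 3 * u.val + 1))
    (fun a b => match a, b with
      | Sum.inl u, Sum.inl _ => 3 * u.val + 1
      | Sum.inr w, Sum.inl u => if u.val = w.val then 3 * w.val else 3 * w.val + 2
      | _, _ => 0) ?_ ?_ ?_ ?_ ?_ ?_ ?_
  · rintro (u | u) (v | v) h <;> simp [Fin.ext_iff] at h ⊢ <;> omega
  · rintro (u | u) <;> simp <;> omega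
  · rintro (u | u) (v | v) <;> simp
    omega
  · rintro (u | u) (v | v) h <;> simp at h ⊢
    all_goals (try split_ifs) <;> omega
  · rintro x hx (u | u) (v | v) h <;> simp at h ⊢ <;> try split_ifs
    all_goals exact isMean_of (by omega) (by omega) (by omega) (by omega)
  · rintro (u | u) (v | v) (u' | u') (v' | v') h h' he <;>
      simp [Fin.ext_iff] at h h' he ⊢ <;> (try split_ifs at he) <;> omega
  · intro c hc
    obtain ⟨i, h | h | h⟩ : ∃ i, c = 3 * i ∨ c = 3 * i + 1 ∨ c = 3 * i + 2 :=
      ⟨c / 3, by omega⟩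
    · exact ⟨Sum.inr ⟨i, by omega⟩, Sum.inl ⟨i, by omega⟩, by simp, by simp [h]⟩
    · exact ⟨Sum.inl ⟨i, by omega⟩, Sum.inl ⟨i + 1, by omega⟩, by simp, by simp [h]⟩
    · exact ⟨Sum.inr ⟨i, by omega⟩, Sum.inl ⟨i + 1, by omega⟩, by simp, by simp [h]⟩

lemma shift_quadSnake {m : ℕ} :
    ShiftLabeling (quadSnakeG m) (4 * (m - 1)) (4 * (m - 1) + 1) := by
  unfold quadSnakeG
  refine shift_of_rel _
    (Sum.elim (fun u => 4 * u.val) (fun p => if p.2 then 4 * p.1.val + 2 else 4 * p.1.val + 1))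
    (fun a b => match a, b with
      | Sum.inl u, Sum.inl _ => 4 * u.val + 2
      | Sum.inl _, Sum.inr (i, b) => if b then 4 * i.val + 3 else 4 * i.val
      | Sum.inr (i, _), Sum.inr _ => 4 * i.val + 1
      | _, _ => 0) ?_ ?_ ?_ ?_ ?_ ?_ ?_
  · rintro (u | ⟨u, _ | _⟩) (v | ⟨v, _ | _⟩) h <;> simp [Fin.ext_iff] at h ⊢ <;> omega
  · rintro (u | ⟨u, _ | _⟩) <;> simp <;> omega
  · rintro (u | ⟨u, _ | _⟩) (v | ⟨v, _ | _⟩) <;> simp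
    omega
  · rintro (u | ⟨u, _ | _⟩) (v | ⟨v, _ | _⟩) h <;> simp at h ⊢ <;> omega
  · rintro x hx (u | ⟨u, _ | _⟩) (v | ⟨v, _ | _⟩) h <;> simp [Fin.ext_iff] at h ⊢ <;>
      exact isMean_of (by omega) (by omega) (by omega) (by omega)
  · rintro (u | ⟨u, _ | _⟩) (v | ⟨v, _ | _⟩) (u' | ⟨u', _ | _⟩) (v' | ⟨v', _ | _⟩) h h' he <;>
      simp [Fin.ext_iff] at h h' he ⊢ <;> omega
  · intro c hc
    obtain ⟨i, h | h | h | h⟩ : ∃ i, c = 4 * i ∨ c = 4 * i + 1 ∨ c = 4 * i + 2 ∨ c = 4 * i + 3 :=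
      ⟨c / 4, by omega⟩
    · exact ⟨Sum.inl ⟨i, by omega⟩, Sum.inr (⟨i, by omega⟩, false), by simp, by simp [h]⟩
    · exact ⟨Sum.inr (⟨i, by omega⟩, false), Sum.inr (⟨i, by omega⟩, true), by simp, by simp [h]⟩
    · exact ⟨Sum.inl ⟨i, by omega⟩, Sum.inl ⟨i + 1, by omega⟩, by simp, by simp [h]⟩
    · exact ⟨Sum.inl ⟨i + 1, by omega⟩, Sum.inr (⟨i, by omega⟩, true), by simp, by simp [h]⟩

/-! ### Cycles and crowns -/

/-- The value of the `i`-th vertex of `C m` in the labeling that goes up through the even values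
below `m` and comes back through the odd ones. -/
def zig (m i : ℕ) : ℕ := if 2 * i < m then 2 * i else 2 * m - 1 - 2 * i

/-- The label of the edge of `C m` from the `i`-th vertex to the next one. -/
def zigEdge (m i : ℕ) : ℕ :=
  if 2 * i + 2 < m then 2 * i + 1 else if 2 * i < m then m - 1 else 2 * m - 2 - 2 * i

/-- The `j`-th vertex of `C m` follows the `i`-th one. -/
def CycSucc (m i j : ℕ) : Prop := j = i + 1 ∨ (i = m - 1 ∧ j = 0)

lemma zig_lt {m i : ℕ} (h : i < m) : zig m i < m := by
  unfold zig
  split_ifs <;> omega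

lemma zig_inj {m i j : ℕ} (hi : i < m) (hj : j < m) (h : zig m i = zig m j) : i = j := by
  unfold zig at h
  split_ifs at h <;> omega

lemma zig_surj {m c : ℕ} (hc : c < m) : ∃ i < m, zig m i = c := by
  rcases Nat.even_or_odd' c with ⟨i, rfl | rfl⟩
  · refine ⟨i, by omega, ?_⟩
    unfold zig
    split_ifs; omega
  · refine ⟨m - 1 - i, by omega, ?_⟩
    unfold zig
    split_ifs <;> omega

lemma zigEdge_lt {m i : ℕ} (hm : 3 ≤ m) : zigEdge m i < m := by
  unfold zigEdge
  split_ifs <;> omega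

lemma zigEdge_inj {m i j : ℕ} (hi : i < m) (hj : j < m) (h : zigEdge m i = zigEdge m j) :
    i = j := by
  unfold zigEdge at h
  split_ifs at h <;> omega

lemma zigEdge_surj {m c : ℕ} (hm : 3 ≤ m) (hc : c < m) :
    ∃ i j, i < m ∧ j < m ∧ CycSucc m i j ∧ zigEdge m i = c := by
  obtain ⟨i, hi, h⟩ : ∃ i < m, zigEdge m i = c := by
    by_cases h : c = m - 1
    · refine ⟨(m - 1) / 2, by omega, ?_⟩
      unfold zigEdge
      split_ifs <;> omega
    · rcases Nat.even_or_odd' c with ⟨i, rfl | rfl⟩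
      · refine ⟨m - 1 - i, by omega, ?_⟩
        unfold zigEdge
        split_ifs <;> omega
      · refine ⟨i, by omega, ?_⟩
        unfold zigEdge
        split_ifs <;> omega
  by_cases h' : i = m - 1
  · exact ⟨i, 0, hi, by omega, Or.inr ⟨h', rfl⟩, h⟩
  · exact ⟨i, i + 1, hi, by omega, Or.inl rfl, h⟩

/-- The three kinds of edges in the cycle labeling: `{0, 1}` with label `0`, `{m - 2, m - 1}` with
label `m - 1`, and `{c - 1, c + 1}` with label `c`. -/
lemma zig_cases {m i j : ℕ} (hm : 3 ≤ m) (hi : i < m) (hj : j < m) (h : CycSucc m i j) :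
    (zigEdge m i = 0 ∧ zig m i = 1 ∧ zig m j = 0) ∨
    (zigEdge m i + 1 = m ∧ (zig m i + 1 = m ∧ zig m j + 2 = m ∨
      zig m i + 2 = m ∧ zig m j + 1 = m)) ∨
    (zigEdge m i + 2 ≤ m ∧ (zig m i + 1 = zigEdge m i ∧ zig m j = zigEdge m i + 1 ∨
      zig m j + 1 = zigEdge m i ∧ zig m i = zigEdge m i + 1)) := by
  unfold CycSucc at h
  unfold zigEdge zig
  split_ifs <;> omega

lemma CycSucc.asymm {m i j : ℕ} (hm : 3 ≤ m) (h : CycSucc m i j) (h' : CycSucc m j i) :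
    False := by
  unfold CycSucc at *
  omega

lemma CycSucc.right_unique {m i j j' : ℕ} (hj : j < m) (hj' : j' < m) (h : CycSucc m i j)
    (h' : CycSucc m i j') : j = j' := by
  unfold CycSucc at *
  omega

lemma shift_cycle {m : ℕ} (hm : 3 ≤ m) : ShiftLabeling (cycleG m) m m := by
  change ShiftLabeling (SimpleGraph.fromRel fun u v : Fin m => CycSucc m u v) m m
  refine shift_of_rel _ (fun u : Fin m => zig m u) (fun u _ => zigEdge m u) ?_ ?_ ?_ ?_ ?_ ?_ ?_
  · intro u v h
    exact Fin.ext (zig_inj u.2 v.2 h)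
  · intro v
    exact zig_lt v.2
  · intro u v
    exact CycSucc.asymm hm
  · intro u v _
    exact zigEdge_lt hm
  · intro x hx u v h
    have := zig_cases hm u.2 v.2 h
    exact isMean_of (by omega) (by omega) (by omega) (by omega)
  · intro u v u' v' h h' he
    have hu : u = u' := Fin.ext (zigEdge_inj u.2 u'.2 he)
    subst hu
    exact ⟨rfl, Fin.ext (h.right_unique v.2 v'.2 h')⟩
  · intro c hc
    obtain ⟨i, j, hi, hj, h, h'⟩ := zigEdge_surj hm hc
    exact ⟨⟨i, hi⟩, ⟨j, hj⟩, h, h'⟩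

lemma shift_crown {m : ℕ} (hm : 3 ≤ m) : ShiftLabeling (crownG m) (2 * m) (2 * m) := by
  change ShiftLabeling (SimpleGraph.fromRel fun a b : Fin m ⊕ Fin m => match a, b with
    | Sum.inl u, Sum.inl v => CycSucc m u v
    | Sum.inl u, Sum.inr v => u = v
    | _, _ => False) (2 * m) (2 * m)
  refine shift_of_rel _ (Sum.elim
      (fun u : Fin m => if zig m u + 1 = m then 2 * zig m u + 1 else 2 * zig m u)
      (fun u : Fin m => if zig m u + 1 = m then 2 * zig m u else 2 * zig m u + 1))
    (fun a b => match a, b with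
      | Sum.inl u, Sum.inl _ => 2 * zigEdge m u
      | Sum.inl u, Sum.inr _ => 2 * zig m u + 1
      | _, _ => 0) ?_ ?_ ?_ ?_ ?_ ?_ ?_
  · rintro (u | u) (v | v) h <;> simp only [Sum.elim_inl, Sum.elim_inr] at h
    · congr 1
      exact Fin.ext (zig_inj u.2 v.2 (by split_ifs at h <;> omega))
    · split_ifs at h <;> omega
    · split_ifs at h <;> omega
    · congr 1
      exact Fin.ext (zig_inj u.2 v.2 (by split_ifs at h <;> omega))
  · rintro (u | u) <;> have := zig_lt u.2 <;> simp only [Sum.elim_inl, Sum.elim_inr] <;>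
      split_ifs <;> omega
  · rintro (u | u) (v | v) h h' <;> simp only at h h'
    exact h.asymm hm h'
  · rintro (u | u) (v | v) h <;> simp only at h ⊢
    · have := zigEdge_lt (i := u) hm
      omega
    · have := zig_lt u.2
      omega
  · rintro x hx (u | u) (v | v) h <;> simp only [Sum.elim_inl, Sum.elim_inr] at h ⊢
    · rcases zig_cases hm u.2 v.2 h with ⟨h1, h2, h3⟩ | ⟨h1, ⟨h2, h3⟩ | ⟨h2, h3⟩⟩ |
        ⟨h1, ⟨h2, h3⟩ | ⟨h2, h3⟩⟩ <;>
      split_ifs <;> exact isMean_of (by omega) (by omega) (by omega) (by omega)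
    · subst h
      split_ifs <;> exact isMean_of (by omega) (by omega) (by omega) (by omega)
  · rintro (u | u) (v | v) (u' | u') (v' | v') h h' he <;> simp only at h h' he
    · have hu : u = u' := Fin.ext (zigEdge_inj u.2 u'.2 (by omega))
      subst hu
      exact ⟨rfl, congrArg Sum.inl (Fin.ext (h.right_unique v.2 v'.2 h'))⟩
    · omega
    · omega
    · have hu : u = u' := Fin.ext (zig_inj u.2 u'.2 (by omega))
      subst hu h h'
      exact ⟨rfl, rfl⟩
  · intro c hc
    rcases Nat.even_or_odd' c with ⟨d, rfl | rfl⟩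
    · obtain ⟨i, j, hi, hj, h, h'⟩ := zigEdge_surj hm (show d < m by omega)
      exact ⟨Sum.inl ⟨i, hi⟩, Sum.inl ⟨j, hj⟩, h, by simp only [h']⟩
    · obtain ⟨i, hi, h⟩ := zig_surj (show d < m by omega)
      exact ⟨Sum.inl ⟨i, hi⟩, Sum.inr ⟨i, hi⟩, rfl, by simp only [h]⟩

/-! ### Disjoint unions -/

lemma sigmaUnion_adj_iff {ι : Type*} {V : ι → Type*} (G : ∀ i, SimpleGraph (V i))
    (a b : Σ i, V i) :
    (sigmaUnion G).Adj a b ↔ ∃ i u v, a = ⟨i, u⟩ ∧ b = ⟨i, v⟩ ∧ (G i).Adj u v := by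
  unfold sigmaUnion
  rw [SimpleGraph.fromRel_adj]
  obtain ⟨i, u⟩ := a
  obtain ⟨j, v⟩ := b
  constructor
  · rintro ⟨-, ⟨h, ha⟩ | ⟨h, ha⟩⟩
    · dsimp only at h
      subst h
      exact ⟨_, _, _, rfl, rfl, ha⟩
    · dsimp only at h
      subst h
      exact ⟨_, _, _, rfl, rfl, ha.symm⟩
  · rintro ⟨i', u', v', h1, h2, ha⟩
    rw [h1, h2]
    refine ⟨?_, Or.inl ⟨rfl, ha⟩⟩
    intro h
    simp only [Sigma.mk.injEq, heq_eq_eq, true_and] at h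
    exact ha.ne h

/-- Consecutive intervals `[o i, o (i + 1))` cover `[o 0, o r)`. -/
lemma exists_block (o : ℕ → ℕ) (r c : ℕ) (h0 : o 0 ≤ c) (hr : c < o r) :
    ∃ i < r, o i ≤ c ∧ c < o (i + 1) := by
  induction r with
  | zero => omega
  | succ r ih =>
    by_cases h : c < o r
    · obtain ⟨i, hi, h⟩ := ih h
      exact ⟨i, by omega, h⟩
    · exact ⟨r, by omega, by omega, hr⟩

/-- Shiftable labelings of the components can be stacked, provided every component but the last
leaves its top value free for the next one. -/
lemma shift_sigma {r : ℕ} {V : Fin r → Type*} (G : ∀ i, SimpleGraph (V i)) (q : Fin r → ℕ)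
    (hinit : ∀ i : Fin r, (i : ℕ) < r - 1 → ShiftLabeling (G i) (q i) (q i))
    (hall : ∀ i : Fin r, ShiftLabeling (G i) (q i) (q i + 1)) :
    ∃ Q, ShiftLabeling (sigmaUnion G) Q (Q + 1) := by
  classical
  let p : ℕ → ℕ := fun j => if h : j < r then q ⟨j, h⟩ else 0
  have hp : ∀ i : Fin r, p i = q i := fun i => by simp [p]
  refine ⟨∑ j ∈ Finset.range r, p j, ?_⟩
  intro x hx
  -- the `i`-th component is labelled from `o i` on
  let o : ℕ → ℕ := fun n => x + ∑ j ∈ Finset.range n, p j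
  have o_succ : ∀ i : Fin r, o (i + 1) = o i + q i := fun i => by
    simp only [o, Finset.sum_range_succ, hp]; omega
  have o_mono : Monotone o := monotone_nat_of_le_succ fun n => by
    simp only [o, Finset.sum_range_succ]; omega
  have o_zero : o 0 = x := by simp [o]
  have ho : ∀ i, x ≤ o i := fun i => by simp [o]
  have key : ∀ i : Fin r, ∃ (ψ : V i → ℕ) (l : V i → V i → ℕ),
      Function.Injective ψ ∧
      (∀ v, o i ≤ ψ v ∧ ψ v < o (i + 1) + 1 ∧ ((i : ℕ) < r - 1 → ψ v < o (i + 1))) ∧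
      (∀ u v, l u v = l v u) ∧
      (∀ u v, (G i).Adj u v → o i ≤ l u v ∧ l u v < o (i + 1) ∧ IsMean (ψ u) (ψ v) (l u v)) ∧
      (∀ u v u' v', (G i).Adj u v → (G i).Adj u' v' → l u v = l u' v' → s(u, v) = s(u', v')) ∧
      (∀ c, o i ≤ c → c < o (i + 1) → ∃ u v, (G i).Adj u v ∧ l u v = c) := by
    intro i
    rw [o_succ]
    by_cases h : (i : ℕ) < r - 1
    · obtain ⟨ψ, l, hψ, hr, h⟩ := hinit i h (o i) (hx.trans (ho i))
      refine ⟨ψ, l, hψ, fun v => ?_, h⟩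
      have := hr v
      omega
    · obtain ⟨ψ, l, hψ, hr, h⟩ := hall i (o i) (hx.trans (ho i))
      refine ⟨ψ, l, hψ, fun v => ?_, h⟩
      have := hr v
      omega
  choose ψ l hψ hψr hs hm hi hsur using key
  let lab : (Σ i, V i) → (Σ i, V i) → ℕ := fun a b =>
    if h : a.1 = b.1 then l b.1 (h ▸ a.2) b.2 else 0
  have lab_mk : ∀ i u v, lab ⟨i, u⟩ ⟨i, v⟩ = l i u v := fun i u v => by simp [lab]
  have o_le : ∀ i : Fin r, o (i + 1) ≤ o r := fun i => o_mono i.2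
  have o_lt : ∀ i j : Fin r, i < j → o (i + 1) ≤ o j := fun i j h => o_mono h
  have psi_lt : ∀ i j : Fin r, i < j → ∀ u v, ψ i u < ψ j v := by
    intro i j h u v
    have h1 := (hψr i u).2.2 (by omega)
    have h2 := (hψr j v).1
    have h3 := o_lt i j h
    omega
  change ∃ ψ l, _ ∧ (∀ v, _ ∧ _ < x + ((∑ j ∈ Finset.range r, p j) + 1)) ∧ _ ∧ _ ∧ _ ∧ _
  rw [← add_assoc]
  change ∃ ψ l, _ ∧ (∀ v, _ ∧ _ < o r + 1) ∧ _ ∧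
    (∀ u v, _ → _ ∧ _ < o r ∧ _) ∧ _ ∧ (∀ c, _ → c < o r → _)
  refine ⟨fun a => ψ a.1 a.2, lab, ?_, ?_, ?_, ?_, ?_, ?_⟩
  · rintro ⟨i, u⟩ ⟨j, v⟩ h
    dsimp only at h
    rcases lt_trichotomy i j with hij | rfl | hij
    · have := psi_lt i j hij u v
      omega
    · rw [hψ i h]
    · have := psi_lt j i hij v u
      omega
  · rintro ⟨i, u⟩
    have h1 := hψr i u
    have h2 := ho i
    have h3 := o_le i
    dsimp only
    omega
  · rintro ⟨i, u⟩ ⟨j, v⟩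
    by_cases h : i = j
    · subst h
      rw [lab_mk, lab_mk, hs]
    · simp [lab, h, Ne.symm h]
  · intro a b hab
    obtain ⟨i, u, v, rfl, rfl, ha⟩ := (sigmaUnion_adj_iff G a b).1 hab
    rw [lab_mk]
    have h1 := hm i u v ha
    have h2 := ho i
    have h3 := o_le i
    exact ⟨by omega, by omega, h1.2.2⟩
  · intro a b a' b' hab hab' he
    obtain ⟨i, u, v, rfl, rfl, ha⟩ := (sigmaUnion_adj_iff G a b).1 hab
    obtain ⟨j, u', v', rfl, rfl, ha'⟩ := (sigmaUnion_adj_iff G a' b').1 hab'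
    rw [lab_mk, lab_mk] at he
    have h1 := hm i u v ha
    have h2 := hm j u' v' ha'
    rcases lt_trichotomy i j with hij | rfl | hij
    · have := o_lt i j hij
      omega
    · exact congrArg (Sym2.map (Sigma.mk i)) (hi i u v u' v' ha ha' he)
    · have := o_lt j i hij
      omega
  · intro c h1 h2
    obtain ⟨i, hir, h3, h4⟩ := exists_block o r c (o_zero ▸ h1) h2
    obtain ⟨u, v, ha, hc⟩ := hsur ⟨i, hir⟩ c h3 h4
    exact ⟨⟨⟨i, hir⟩, u⟩, ⟨⟨i, hir⟩, v⟩, (sigmaUnion_adj_iff G _ _).2 ⟨_, _, _, rfl, rfl, ha⟩,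
      by rw [lab_mk, hc]⟩

/-- Let `k ≥ 1` and let `G_1, …, G_r` (`r ≥ 1`) be finite simple graphs on pairwise disjoint
vertex sets such that each of `G_1, …, G_{r-1}` is a cycle `C m` (`m ≥ 3`) or a crown
`C m ⊙ K 1` (`m ≥ 3`), and `G_r` is a cycle (`m ≥ 3`), a crown (`m ≥ 3`), a path `P m`
(`m ≥ 1`), a comb `P m ⊙ K 1` (`m ≥ 1`), a triangular snake `T m` (`m ≥ 2`) or a
quadrilateral snake `Q m` (`m ≥ 2`). Then the disjoint union `G_1 ∪ ⋯ ∪ G_r` is a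
`k`-geometric mean graph. -/
theorem statement16 (k : ℕ) (hk : 1 ≤ k) (r : ℕ) (hr : 1 ≤ r)
    (V : Fin r → Type*) [∀ i, Fintype (V i)]
    (G : ∀ i, SimpleGraph (V i))
    (hinit : ∀ i : Fin r, (i : ℕ) < r - 1 →
      (∃ m, 3 ≤ m ∧ Nonempty (G i ≃g cycleG m)) ∨
      (∃ m, 3 ≤ m ∧ Nonempty (G i ≃g crownG m)))
    (hlast : (∃ m, 3 ≤ m ∧ Nonempty (G ⟨r - 1, by omega⟩ ≃g cycleG m)) ∨
      (∃ m, 3 ≤ m ∧ Nonempty (G ⟨r - 1, by omega⟩ ≃g crownG m)) ∨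
      (∃ m, 1 ≤ m ∧ Nonempty (G ⟨r - 1, by omega⟩ ≃g pathG m)) ∨
      (∃ m, 1 ≤ m ∧ Nonempty (G ⟨r - 1, by omega⟩ ≃g combG m)) ∨
      (∃ m, 2 ≤ m ∧ Nonempty (G ⟨r - 1, by omega⟩ ≃g triSnakeG m)) ∨
      (∃ m, 2 ≤ m ∧ Nonempty (G ⟨r - 1, by omega⟩ ≃g quadSnakeG m))) :
    IsKGeometricMeanGraph (sigmaUnion G) k := by
  have hinit' : ∀ i : Fin r, (i : ℕ) < r - 1 → ∃ q, ShiftLabeling (G i) q q := by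
    intro i hi
    rcases hinit i hi with ⟨m, hm, ⟨φ⟩⟩ | ⟨m, hm, ⟨φ⟩⟩
    · exact ⟨_, (shift_cycle hm).of_iso φ⟩
    · exact ⟨_, (shift_crown hm).of_iso φ⟩
  have hlast' : ∃ q, ShiftLabeling (G ⟨r - 1, by omega⟩) q (q + 1) := by
    rcases hlast with ⟨m, hm, ⟨φ⟩⟩ | ⟨m, hm, ⟨φ⟩⟩ | ⟨m, hm, ⟨φ⟩⟩ | ⟨m, hm, ⟨φ⟩⟩ | ⟨m, hm, ⟨φ⟩⟩ |
      ⟨m, hm, ⟨φ⟩⟩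
    · exact ⟨_, ((shift_cycle hm).of_iso φ).mono (Nat.le_succ _)⟩
    · exact ⟨_, ((shift_crown hm).of_iso φ).mono (Nat.le_succ _)⟩
    · exact ⟨_, (shift_path hm).of_iso φ⟩
    · exact ⟨_, (shift_comb hm).of_iso φ⟩
    · exact ⟨_, shift_triSnake.of_iso φ⟩
    · exact ⟨_, shift_quadSnake.of_iso φ⟩
  have hq : ∀ i : Fin r, ∃ q, ((i : ℕ) < r - 1 → ShiftLabeling (G i) q q) ∧
      ShiftLabeling (G i) q (q + 1) := by
    intro i
    by_cases hi : (i : ℕ) < r - 1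
    · obtain ⟨q, h⟩ := hinit' i hi
      exact ⟨q, fun _ => h, h.mono (Nat.le_succ _)⟩
    · obtain ⟨q, h⟩ := hlast'
      have hir : i = ⟨r - 1, by omega⟩ := Fin.ext (by simp only; omega)
      rw [← hir] at h
      exact ⟨q, fun h' => absurd h' hi, h⟩
  choose q hq1 hq2 using hq
  obtain ⟨Q, hQ⟩ := shift_sigma G q hq1 hq2
  exact isKGeometricMeanGraph_of_shift hk hQ
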